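/- arXiv:2406.15742 — 3 statements merged into one kernel-verified Lean document; each statement's English description precedes it below -/
import Mathlib

section
/- Sampling a single primitive random variable yields a well-behaved trace measure: let μ be a finite measure on V with μ ≪ ν and density f (so μ = ν.withDensity f), and let k : String. Let ι_k : V → 𝕋 be the map sending v to the trace of shape {k} whose value at k is v. Then the pushforward measure (ι_k)_* μ on 𝕋 satisfies: (1) (ι_k)_* μ ≪ B_𝕋, with density u ↦ f(u k) if the shape of u is {k} and 0 otherwise; and (2) (ι_k)_* μ is discrete-structured. -/
open MeasureTheory
open scoped ENNReal NNReal

/-- The value space: reals together with Booleans. -/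
abbrev V : Type := ℝ ⊕ Bool

/-- The base measure on values: Lebesgue measure on the real component plus
counting measure on the Boolean component. -/
noncomputable def ν : Measure V :=
  Measure.map Sum.inl (volume : Measure ℝ) + Measure.map Sum.inr (Measure.count : Measure Bool)

/-- The space of traces: finite dictionaries from names (strings) to values. -/
abbrev 𝕋 : Type := Σ s : Finset String, (↑s → V)

/-- The base measure on traces. -/
noncomputable def B𝕋 : Measure 𝕋 :=
  Measure.sum fun s : Finset String =>
    Measure.map (fun f => (⟨s, f⟩ : 𝕋)) (Measure.pi fun _ : ↑s => ν)

/-- A measure on traces is discrete-structured if almost every pair of traces is either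
equal, or disagrees at some name present in the shape of both. -/
def DiscreteStructured (μ : Measure 𝕋) : Prop :=
  ∀ᵐ p ∂(μ.prod μ),
    p.1 = p.2 ∨ ∃ (k : String) (h₁ : k ∈ p.1.1) (h₂ : k ∈ p.2.1),
      p.1.2 ⟨k, h₁⟩ ≠ p.2.2 ⟨k, h₂⟩

/-- The singleton trace `{k ↦ v}`. -/
def ι (k : String) (v : V) : 𝕋 := ⟨{k}, fun _ => v⟩

/-!
The base measure restricted to traces of shape `{k}` is the pushforward of `ν` under the measurable
embedding `ι k`, and a density vanishing off that shape only sees this restriction. Two traces of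
the same shape differ only by their values, so sharing a shape almost surely already forces a
measure to be discrete-structured.
-/

theorem map_withDensity_comp_of_measurableEmbedding {α β : Type*} [MeasurableSpace α]
    [MeasurableSpace β] {e : α → β} (he : MeasurableEmbedding e) (μ : Measure α) (g : β → ℝ≥0∞) :
    (μ.withDensity (g ∘ e)).map e = (μ.map e).withDensity g := by
  ext S hS
  rw [he.map_apply, withDensity_apply _ (he.measurable hS), withDensity_apply _ hS,
    he.restrict_map, he.lintegral_map]
  rfl

section Sigma

variable {I : Type*} {X : I → Type*} [∀ i, MeasurableSpace (X i)]

theorem measurableSet_sigma_iff {S : Set (Σ i, X i)} :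
    MeasurableSet S ↔ ∀ i, MeasurableSet (Sigma.mk i ⁻¹' S) :=
  MeasurableSpace.measurableSet_iInf

theorem measurable_sigmaMk (i : I) : Measurable (Sigma.mk i : X i → Σ i, X i) :=
  fun _ hS ↦ measurableSet_sigma_iff.1 hS i

theorem measurableEmbedding_sigmaMk (i : I) :
    MeasurableEmbedding (Sigma.mk i : X i → Σ i, X i) where
  injective := sigma_mk_injective
  measurable := measurable_sigmaMk i
  measurableSet_image' S hS := measurableSet_sigma_iff.2 fun j ↦ by
    obtain rfl | hij := eq_or_ne j i
    · rwa [Set.preimage_image_eq _ sigma_mk_injective]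
    · rw [Set.preimage_image_sigmaMk_of_ne hij]
      exact .empty

theorem measurableSet_sigma_fst_preimage_singleton (i : I) :
    MeasurableSet (Sigma.fst ⁻¹' {i} : Set (Σ i, X i)) := by
  rw [← Set.range_sigmaMk]
  exact (measurableEmbedding_sigmaMk i).measurableSet_range

theorem restrict_sum_map_sigmaMk (μ : ∀ i, Measure (X i)) (i : I) :
    (Measure.sum fun j ↦ (μ j).map (Sigma.mk j)).restrict (Sigma.fst ⁻¹' {i}) =
      (μ i).map (Sigma.mk i) := by
  ext S hS
  have hSi : MeasurableSet (S ∩ Sigma.fst ⁻¹' {i}) :=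
    hS.inter (measurableSet_sigma_fst_preimage_singleton i)
  rw [Measure.restrict_apply hS, Measure.sum_apply _ hSi, tsum_eq_single i]
  · rw [(measurableEmbedding_sigmaMk i).map_apply, (measurableEmbedding_sigmaMk i).map_apply]
    simp [Set.preimage_inter, Set.preimage_preimage]
  · intro j hji
    rw [(measurableEmbedding_sigmaMk j).map_apply]
    simp [Set.preimage_inter, Set.preimage_preimage, hji]

end Sigma

theorem measurableEmbedding_ι (k : String) : MeasurableEmbedding (ι k) :=
  (measurableEmbedding_sigmaMk _).comp (MeasurableEquiv.funUnique _ V).symm.measurableEmbedding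

theorem map_ι_ν (k : String) : ν.map (ι k) = B𝕋.restrict (Sigma.fst ⁻¹' {{k}}) := by
  have hν : ν.map (MeasurableEquiv.funUnique ↑({k} : Finset String) V).symm =
      Measure.pi fun _ ↦ ν :=
    ((measurePreserving_funUnique ν _).symm _).map_eq
  rw [B𝕋, restrict_sum_map_sigmaMk, ← hν,
    Measure.map_map (measurable_sigmaMk _) (MeasurableEquiv.measurable _)]
  rfl

theorem map_ι_withDensity (k : String) (g : 𝕋 → ℝ≥0∞) :
    (ν.withDensity (g ∘ ι k)).map (ι k) =
      B𝕋.withDensity ((Sigma.fst ⁻¹' {{k}}).indicator g) := by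
  rw [map_withDensity_comp_of_measurableEmbedding (measurableEmbedding_ι k), map_ι_ν,
    withDensity_indicator (measurableSet_sigma_fst_preimage_singleton _)]

theorem eq_or_exists_ne_of_shape_eq {u v : 𝕋} (h : u.1 = v.1) :
    u = v ∨ ∃ (k : String) (hu : k ∈ u.1) (hv : k ∈ v.1), u.2 ⟨k, hu⟩ ≠ v.2 ⟨k, hv⟩ := by
  obtain ⟨s, a⟩ := u
  obtain ⟨_, b⟩ := v
  obtain rfl : s = _ := h
  by_cases hab : a = b
  · exact .inl (congrArg _ hab)
  · obtain ⟨⟨k, hk⟩, hne⟩ := Function.ne_iff.1 hab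
    exact .inr ⟨k, hk, hk, hne⟩

theorem DiscreteStructured.of_ae_shape_eq {μ : Measure 𝕋} {s : Finset String}
    (h : ∀ᵐ u ∂μ, u.1 = s) : DiscreteStructured μ := by
  filter_upwards [Measure.quasiMeasurePreserving_fst.ae h,
    Measure.quasiMeasurePreserving_snd.ae h] with p h₁ h₂
  exact eq_or_exists_ne_of_shape_eq (h₁.trans h₂.symm)

theorem discreteStructured_map_ι (μ : Measure V) (k : String) :
    DiscreteStructured (μ.map (ι k)) :=
  .of_ae_shape_eq ((measurableEmbedding_ι k).ae_map_iff.2 (.of_forall fun _ ↦ rfl))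

theorem sample_trace_measure_wellBehaved_general
    (μ : Measure V) (f : V → ℝ≥0∞) (hμ : μ = ν.withDensity f) (k : String) :
    Measure.map (ι k) μ ≪ B𝕋 ∧
    Measure.map (ι k) μ =
      B𝕋.withDensity (fun u =>
        if h : u.1 = ({k} : Finset String) then
          f (u.2 ⟨k, by simp [h]⟩)
        else 0) ∧
    DiscreteStructured (Measure.map (ι k) μ) := by
  set g : 𝕋 → ℝ≥0∞ := fun u ↦
    if h : u.1 = ({k} : Finset String) then f (u.2 ⟨k, by simp [h]⟩) else 0
  have hgι : g ∘ ι k = f := funext fun v ↦ dif_pos rfl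
  have hg_indicator : (Sigma.fst ⁻¹' {{k}}).indicator g = g :=
    Set.indicator_eq_self.2 fun u hu ↦ by_contra fun hne ↦ hu (dif_neg hne)
  have hdensity : μ.map (ι k) = B𝕋.withDensity g := by
    rw [← hg_indicator, ← map_ι_withDensity, hgι, hμ]
  exact ⟨hdensity ▸ withDensity_absolutelyContinuous _ _, hdensity, discreteStructured_map_ι μ k⟩

/-- Sampling a single primitive random variable at name `k` from a primitive
distribution `μ = ν.withDensity f` yields a trace measure that is absolutely
continuous w.r.t. `B𝕋` — with density `u ↦ f (u k)` on traces of shape `{k}`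
and `0` elsewhere — and is discrete-structured. -/
theorem sample_trace_measure_wellBehaved
    (μ : Measure V) [IsFiniteMeasure μ] (f : V → ℝ≥0∞) (hf : Measurable f)
    (hμ : μ = ν.withDensity f) (k : String) :
    Measure.map (ι k) μ ≪ B𝕋 ∧
    Measure.map (ι k) μ =
      B𝕋.withDensity (fun u =>
        if h : u.1 = ({k} : Finset String) then
          f (u.2 ⟨k, by simp [h]⟩)
        else 0) ∧
    DiscreteStructured (Measure.map (ι k) μ) :=
  sample_trace_measure_wellBehaved_general μ f hμ k
end

section
/- Sequencing preserves absolute continuity of trace measures, with an explicit density for the composite: let μ be a finite measure on 𝕋 with μ ≪ B_𝕋 and density f, and let κ be a Markov kernel from 𝕋 to 𝕋 such that there is a jointly measurable g : 𝕋 × 𝕋 → [0,∞] with κ(u) = B_𝕋.withDensity (g u) for every u. Define the measure β on 𝕋 by β(A) := ∫_𝕋 ∫_𝕋 1[u₁ and u₂ are disjoint] · 1_A(u₁ ++ u₂) dκ(u₁)(u₂) dμ(u₁). Then β ≪ B_𝕋, and a density of β with respect to B_𝕋 is given at a trace u of shape s by the finite sum h(u) := Σ_{A ⊆ s} f(u↾A)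 · g(u↾A, u↾(s \ A)), where u↾A denotes the trace of shape A obtained by restricting u to the names in A. -/
open MeasureTheory
open scoped ENNReal NNReal

/-- Concatenation of traces (for traces with disjoint shapes, the result agrees with
the first on its shape and with the second on its shape; on overlapping names the
first trace takes precedence). -/
def tcat (u₁ u₂ : 𝕋) : 𝕋 :=
  ⟨u₁.1 ∪ u₂.1, fun k =>
    if h : k.1 ∈ u₁.1 then u₁.2 ⟨k.1, h⟩
    else u₂.2 ⟨k.1, (Finset.mem_union.mp k.2).resolve_left h⟩⟩

/-- Restriction of a trace `u` to a subset `A` of its shape. -/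
def tres (u : 𝕋) (A : Finset String) (hA : A ⊆ u.1) : 𝕋 :=
  ⟨A, fun k => u.2 ⟨k.1, hA k.2⟩⟩

/-!
A pair of traces with disjoint shapes is the same thing as a single trace `w` together with a
subset `A` of its shape: concatenate in one direction, restrict to `A` and to its complement in the
other. For fixed `A ⊆ w.1` this correspondence identifies `∏_{k ∈ w.1} ν k` with the product of the
base measures over `A` and over `w.1 \ A`, so integrating `F` over disjoint pairs of traces is
integrating `w ↦ ∑_{A ⊆ w.1} F (w↾A, w↾(w.1 \ A))` over single traces. The measure of a set `E`
under sequencing is such an integral, with `F (u, v)` the product of `f u * g (u, v)` and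
`1_E (u ++ v)`; the second factor is `1_E w` for every `A` and comes out of the sum.
-/

section Sigma

variable {ι κ γ : Type*} {α : ι → Type*} {β : κ → Type*} [∀ i, MeasurableSpace (α i)]
  [∀ j, MeasurableSpace (β j)] [MeasurableSpace γ]

theorem measurable_sigmaMk_s2 (i : ι) : Measurable (Sigma.mk i : α i → Sigma α) :=
  fun _ hS => MeasurableSpace.measurableSet_iInf.mp hS i

theorem measurable_of_comp_sigmaMk {f : Sigma α → γ}
    (hf : ∀ i, Measurable fun x : α i => f ⟨i, x⟩) : Measurable f :=
  fun _ hS => MeasurableSpace.measurableSet_iInf.mpr fun i => hf i hS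

theorem measurableEmbedding_sigmaMk_s2 (i : ι) :
    MeasurableEmbedding (Sigma.mk i : α i → Sigma α) where
  injective := sigma_mk_injective
  measurable := measurable_sigmaMk_s2 i
  measurableSet_image' S hS := MeasurableSpace.measurableSet_iInf.mpr fun j => by
    change MeasurableSet (Sigma.mk j ⁻¹' (Sigma.mk i '' S))
    by_cases hij : i = j
    · subst hij
      rwa [Set.preimage_image_eq S sigma_mk_injective]
    · rw [Set.preimage_image_sigmaMk_of_ne (Ne.symm hij)]
      exact MeasurableSet.empty

theorem measurable_of_comp_sigmaMk_prodMap [Countable ι] [Countable κ]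
    {f : Sigma α × Sigma β → γ}
    (hf : ∀ i j, Measurable fun p : α i × β j => f (⟨i, p.1⟩, ⟨j, p.2⟩)) : Measurable f := by
  intro S hS
  have preimage_eq : f ⁻¹' S = ⋃ i, ⋃ j, Prod.map (Sigma.mk i) (Sigma.mk j) ''
      ((fun p : α i × β j => f (⟨i, p.1⟩, ⟨j, p.2⟩)) ⁻¹' S) := by
    ext ⟨⟨i, x⟩, ⟨j, y⟩⟩
    simp only [Set.mem_iUnion, Set.mem_image, Set.mem_preimage]
    constructor
    · exact fun h => ⟨i, j, (x, y), h, rfl⟩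
    · rintro ⟨i', j', p, hp, hpxy⟩
      rwa [← hpxy]
  rw [preimage_eq]
  exact .iUnion fun i => .iUnion fun j =>
    ((measurableEmbedding_sigmaMk_s2 i).prodMap
      (measurableEmbedding_sigmaMk_s2 j)).measurableSet_image.mpr (hf i j hS)

end Sigma

theorem tsum_tsum_disjoint_eq_tsum_sum_powerset {ι : Type*} [DecidableEq ι]
    (c : Finset ι → Finset ι → ℝ≥0∞) :
    ∑' s, ∑' t, (if Disjoint s t then c s t else 0) = ∑' w, ∑ A ∈ w.powerset, c A (w \ A) := by
  have tsum_disjoint (s : Finset ι) :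
      ∑' t, (if Disjoint s t then c s t else 0) = ∑' w, if s ⊆ w then c s (w \ s) else 0 := by
    let e : {t | Disjoint s t} ≃ {w | s ⊆ w} :=
      { toFun t := ⟨s ∪ t, Finset.subset_union_left⟩
        invFun w := ⟨w \ s, Finset.disjoint_sdiff⟩
        left_inv t := Subtype.ext (Finset.union_sdiff_cancel_left t.2)
        right_inv w := Subtype.ext (Finset.union_sdiff_of_subset w.2) }
    calc ∑' t, (if Disjoint s t then c s t else 0)
      _ = ∑' t : {t | Disjoint s t}, c s t := by
        simpa only [Set.indicator_apply, Set.mem_ofPred_eq] using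
          (tsum_subtype {t | Disjoint s t} (c s)).symm
      _ = ∑' w : {w | s ⊆ w}, c s (w \ s) :=
        (e.symm.tsum_eq fun t : {t | Disjoint s t} => c s t).symm
      _ = ∑' w, if s ⊆ w then c s (w \ s) else 0 := by
        simpa only [Set.indicator_apply, Set.mem_ofPred_eq] using
          tsum_subtype {w | s ⊆ w} fun w => c s (w \ s)
  have sum_powerset (w : Finset ι) :
      ∑ A ∈ w.powerset, c A (w \ A) = ∑' A, if A ⊆ w then c A (w \ A) else 0 := by
    rw [tsum_eq_sum fun A hA => if_neg (mt Finset.mem_powerset.mpr hA)]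
    exact Finset.sum_congr rfl fun A hA => (if_pos (Finset.mem_powerset.mp hA)).symm
  simp_rw [tsum_disjoint, sum_powerset]
  exact ENNReal.tsum_comm

theorem measurePreserving_restrict₂_prodMk {ι : Type*} [DecidableEq ι] {X : ι → Type*}
    [∀ i, MeasurableSpace (X i)] (ν : ∀ i, Measure (X i)) [∀ i, SigmaFinite (ν i)]
    {s t w : Finset ι} (hst : Disjoint s t) (hw : s ∪ t = w) (hs : s ⊆ w) (ht : t ⊆ w) :
    MeasurePreserving
      (fun z : ∀ i : w, X i => (Finset.restrict₂ (π := X) hs z, Finset.restrict₂ (π := X) ht z))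
      (Measure.pi fun i : w => ν i)
      ((Measure.pi fun i : s => ν i).prod (Measure.pi fun i : t => ν i)) := by
  subst hw
  exact (measurePreserving_piFinsetUnion hst ν).symm

theorem lintegral_lintegral_withDensity {α β : Type*} [MeasurableSpace α] [MeasurableSpace β]
    (μ : Measure α) (ν : Measure β) [SFinite ν] {f : α → ℝ≥0∞} (hf : Measurable f)
    {g G : α × β → ℝ≥0∞} (hg : Measurable g) (hG : Measurable G) :
    ∫⁻ u, ∫⁻ v, G (u, v) ∂(ν.withDensity fun v => g (u, v)) ∂(μ.withDensity f) =
      ∫⁻ u, ∫⁻ v, f u * g (u, v) * G (u, v) ∂ν ∂μ := by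
  have inner_eq (u : α) :
      ∫⁻ v, G (u, v) ∂(ν.withDensity fun v => g (u, v)) = ∫⁻ v, g (u, v) * G (u, v) ∂ν :=
    lintegral_withDensity_eq_lintegral_mul _ (hg.comp measurable_prodMk_left)
      (hG.comp measurable_prodMk_left)
  have hgG : Measurable fun p => g p * G p := hg.mul hG
  simp_rw [inner_eq]
  rw [lintegral_withDensity_eq_lintegral_mul _ hf hgG.lintegral_prod_right']
  refine lintegral_congr fun u => ?_
  simp_rw [mul_assoc]
  exact (lintegral_const_mul _ (hgG.comp measurable_prodMk_left)).symm

/-- Traces over names in `ι`, where the value stored at a name `k` has type `X k`: a finite shape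
together with a value for each name in it. The value type may depend on the name; `𝕋` is the
constant case. -/
abbrev Trace {ι : Type*} (X : ι → Type*) : Type _ := Σ s : Finset ι, ∀ k : s, X k

namespace Trace

variable {ι : Type*} {X : ι → Type*}

theorem ext_of_apply_eq {u v : Trace X} (hshape : u.1 = v.1)
    (hval : ∀ k (hu : k ∈ u.1) (hv : k ∈ v.1), u.2 ⟨k, hu⟩ = v.2 ⟨k, hv⟩) : u = v := by
  obtain ⟨s, x⟩ := u
  obtain ⟨t, y⟩ := v
  subst hshape
  exact congrArg (Sigma.mk s) (funext fun k => hval k k.2 k.2)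

/-- The restriction of a trace to a subset of its shape, generalizing `tres`. -/
def restrict (u : Trace X) (A : Finset ι) (hA : A ⊆ u.1) : Trace X :=
  ⟨A, fun k => u.2 ⟨k, hA k.2⟩⟩

section BaseMeasure

variable [∀ k, MeasurableSpace (X k)]

theorem measurable_restrict (s A : Finset ι) (hA : A ⊆ s) :
    Measurable fun x : ∀ k : s, X k => restrict ⟨s, x⟩ A hA :=
  (measurable_sigmaMk_s2 A).comp (Finset.measurable_restrict₂ hA)

/-- The base measure on traces, generalizing `B𝕋`: the sum over all shapes of the product of the
measures `ν k` over the names `k` in the shape. -/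
noncomputable def baseMeasure (ν : ∀ k, Measure (X k)) : Measure (Trace X) :=
  Measure.sum fun s : Finset ι =>
    Measure.map (fun x => (⟨s, x⟩ : Trace X)) (Measure.pi fun k : s => ν k)

variable (ν : ∀ k, Measure (X k))

theorem lintegral_baseMeasure {F : Trace X → ℝ≥0∞} (hF : Measurable F) :
    ∫⁻ u, F u ∂baseMeasure ν = ∑' s : Finset ι, ∫⁻ x, F ⟨s, x⟩ ∂(Measure.pi fun k : s => ν k) := by
  rw [baseMeasure, lintegral_sum_measure]
  exact tsum_congr fun s => lintegral_map hF (measurable_sigmaMk_s2 s)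

variable [Countable ι] [∀ k, SigmaFinite (ν k)]

instance : SFinite (baseMeasure ν) := by
  unfold baseMeasure
  infer_instance

theorem lintegral_lintegral_baseMeasure {F : Trace X × Trace X → ℝ≥0∞} (hF : Measurable F) :
    ∫⁻ u, ∫⁻ v, F (u, v) ∂baseMeasure ν ∂baseMeasure ν =
      ∑' (s : Finset ι) (t : Finset ι), ∫⁻ x, ∫⁻ y, F (⟨s, x⟩, ⟨t, y⟩)
        ∂(Measure.pi fun k : t => ν k) ∂(Measure.pi fun k : s => ν k) := by
  rw [lintegral_baseMeasure ν hF.lintegral_prod_right']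
  refine tsum_congr fun s => ?_
  have hFst (t : Finset ι) :
      Measurable fun p : (∀ k : s, X k) × (∀ k : t, X k) => F (⟨s, p.1⟩, ⟨t, p.2⟩) :=
    hF.comp ((measurable_sigmaMk_s2 s).prodMap (measurable_sigmaMk_s2 t))
  rw [← lintegral_tsum fun t => (hFst t).lintegral_prod_right'.aemeasurable]
  exact lintegral_congr fun x => lintegral_baseMeasure ν (hF.comp measurable_prodMk_left)

end BaseMeasure

variable [DecidableEq ι]

/-- The concatenation of two traces, generalizing `tcat`: the first trace takes precedence on names
that both of them contain. -/
def concat (u v : Trace X) : Trace X :=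
  ⟨u.1 ∪ v.1, fun k =>
    if h : k.1 ∈ u.1 then u.2 ⟨k, h⟩ else v.2 ⟨k, (Finset.mem_union.mp k.2).resolve_left h⟩⟩

/-- The splitting of a trace, along a subset `A` of its shape, into its restrictions to `A` and to
the complement of `A`. -/
def split (w : Trace X) (A : Finset ι) (hA : A ⊆ w.1) : Trace X × Trace X :=
  (w.restrict A hA, w.restrict (w.1 \ A) Finset.sdiff_subset)

theorem concat_split (w : Trace X) {A : Finset ι} (hA : A ⊆ w.1) :
    concat (w.split A hA).1 (w.split A hA).2 = w := by
  refine ext_of_apply_eq (Finset.union_sdiff_of_subset hA) fun k _ _ => ?_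
  by_cases hk : k ∈ A <;> simp [concat, split, restrict, hk]

/-- The sum of `F` over all ways of splitting a trace into a pair of traces whose shapes partition
its shape. -/
noncomputable def sumSplits (F : Trace X × Trace X → ℝ≥0∞) (w : Trace X) : ℝ≥0∞ :=
  ∑ A ∈ w.1.powerset.attach, F (w.split A.1 (Finset.mem_powerset.mp A.2))

theorem sumSplits_mul_concat (F : Trace X × Trace X → ℝ≥0∞) (P : Trace X → ℝ≥0∞) (w : Trace X) :
    sumSplits (fun p => F p * P (concat p.1 p.2)) w = sumSplits F w * P w := by
  simp only [sumSplits, concat_split, Finset.sum_mul]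

variable [∀ k, MeasurableSpace (X k)]

theorem measurable_comp_split {F : Trace X × Trace X → ℝ≥0∞} (hF : Measurable F) {s A : Finset ι}
    (hA : A ⊆ s) : Measurable fun x : ∀ k : s, X k => F (split ⟨s, x⟩ A hA) :=
  hF.comp ((measurable_restrict s A hA).prodMk (measurable_restrict s (s \ A) Finset.sdiff_subset))

theorem measurable_sumSplits {F : Trace X × Trace X → ℝ≥0∞} (hF : Measurable F) :
    Measurable (sumSplits F) := by
  refine measurable_of_comp_sigmaMk fun s => ?_
  simp only [sumSplits]
  exact Finset.measurable_fun_sum _ fun (A : {A // A ∈ s.powerset}) _ =>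
    measurable_comp_split hF (Finset.mem_powerset.mp A.2)

theorem measurable_concat [Countable ι] :
    Measurable fun p : Trace X × Trace X => concat p.1 p.2 := by
  refine measurable_of_comp_sigmaMk_prodMap fun s t =>
    (measurable_sigmaMk_s2 (s ∪ t)).comp (measurable_pi_lambda _ fun k => ?_)
  by_cases hk : k.1 ∈ s
  · simp only [hk, dite_true]
    exact (measurable_pi_apply (⟨k, hk⟩ : s)).comp measurable_fst
  · simp only [hk, dite_false]
    exact (measurable_pi_apply
      (⟨k, (Finset.mem_union.mp k.2).resolve_left hk⟩ : t)).comp measurable_snd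

theorem measurable_ite_disjoint [Countable ι] {F : Trace X × Trace X → ℝ≥0∞} (hF : Measurable F) :
    Measurable fun p : Trace X × Trace X => if Disjoint p.1.1 p.2.1 then F p else 0 := by
  refine .ite ?_ hF measurable_const
  exact measurableSet_setOfPred.mpr <| measurable_of_comp_sigmaMk_prodMap fun s t =>
    (measurable_const : Measurable fun _ => Disjoint s t)

variable (ν : ∀ k, Measure (X k)) [∀ k, SigmaFinite (ν k)]

theorem lintegral_pi_split {F : Trace X × Trace X → ℝ≥0∞} (hF : Measurable F)
    {A w : Finset ι} (hA : A ⊆ w) :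
    ∫⁻ z, F (split ⟨w, z⟩ A hA) ∂(Measure.pi fun k : w => ν k) =
      ∫⁻ x, ∫⁻ y, F (⟨A, x⟩, ⟨w \ A, y⟩)
        ∂(Measure.pi fun k : ↥(w \ A) => ν k) ∂(Measure.pi fun k : A => ν k) := by
  have hF' : Measurable fun p : (∀ k : A, X k) × (∀ k : ↥(w \ A), X k) =>
      F (⟨A, p.1⟩, ⟨w \ A, p.2⟩) :=
    hF.comp ((measurable_sigmaMk_s2 A).prodMap (measurable_sigmaMk_s2 (w \ A)))
  rw [← lintegral_prod _ hF'.aemeasurable]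
  exact (measurePreserving_restrict₂_prodMk ν Finset.disjoint_sdiff
    (Finset.union_sdiff_of_subset hA) hA Finset.sdiff_subset).lintegral_comp hF'

variable [Countable ι]

theorem lintegral_lintegral_disjoint_eq_lintegral_sumSplits {F : Trace X × Trace X → ℝ≥0∞}
    (hF : Measurable F) :
    ∫⁻ u, ∫⁻ v, (if Disjoint u.1 v.1 then F (u, v) else 0) ∂baseMeasure ν ∂baseMeasure ν =
      ∫⁻ w, sumSplits F w ∂baseMeasure ν := by
  let c (s t : Finset ι) : ℝ≥0∞ := ∫⁻ x, ∫⁻ y, F (⟨s, x⟩, ⟨t, y⟩)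
    ∂(Measure.pi fun k : t => ν k) ∂(Measure.pi fun k : s => ν k)
  have lintegral_sumSplits (w : Finset ι) :
      ∫⁻ z, sumSplits F ⟨w, z⟩ ∂(Measure.pi fun k : w => ν k) =
        ∑ A ∈ w.powerset, c A (w \ A) := by
    rw [← Finset.sum_attach]
    simp only [sumSplits]
    rw [lintegral_finsetSum _ fun (A : {A // A ∈ w.powerset}) _ =>
      measurable_comp_split hF (Finset.mem_powerset.mp A.2)]
    exact Finset.sum_congr rfl fun A _ => lintegral_pi_split ν hF (Finset.mem_powerset.mp A.2)
  calc ∫⁻ u, ∫⁻ v, (if Disjoint u.1 v.1 then F (u, v) else 0) ∂baseMeasure ν ∂baseMeasure ν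
    _ = ∑' (s : Finset ι) (t : Finset ι), if Disjoint s t then c s t else 0 := by
      rw [lintegral_lintegral_baseMeasure ν (measurable_ite_disjoint hF)]
      refine tsum_congr fun s => tsum_congr fun t => ?_
      split_ifs <;> simp [c]
    _ = ∑' w : Finset ι, ∑ A ∈ w.powerset, c A (w \ A) :=
      tsum_tsum_disjoint_eq_tsum_sum_powerset c
    _ = ∫⁻ w, sumSplits F w ∂baseMeasure ν := by
      rw [lintegral_baseMeasure ν (measurable_sumSplits hF)]
      exact tsum_congr fun w => (lintegral_sumSplits w).symm

theorem lintegral_lintegral_concat_withDensity {f : Trace X → ℝ≥0∞} (hf : Measurable f)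
    {g : Trace X × Trace X → ℝ≥0∞} (hg : Measurable g) {P : Trace X → ℝ≥0∞} (hP : Measurable P) :
    ∫⁻ u, ∫⁻ v, (if Disjoint u.1 v.1 then P (concat u v) else 0)
        ∂((baseMeasure ν).withDensity fun v => g (u, v)) ∂((baseMeasure ν).withDensity f) =
      ∫⁻ w, sumSplits (fun p => f p.1 * g p) w * P w ∂baseMeasure ν := by
  have hPconcat : Measurable fun p : Trace X × Trace X => P (concat p.1 p.2) :=
    hP.comp measurable_concat
  rw [lintegral_lintegral_withDensity _ _ hf hg (measurable_ite_disjoint hPconcat)]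
  simp_rw [mul_ite, mul_zero, ← sumSplits_mul_concat]
  exact lintegral_lintegral_disjoint_eq_lintegral_sumSplits ν
    (((hf.comp measurable_fst).mul hg).mul hPconcat)

end Trace

open Trace in
theorem seq_absolutelyContinuous_general {ι : Type*} [DecidableEq ι] [Countable ι] {X : ι → Type*}
    [∀ k, MeasurableSpace (X k)] (ν : ∀ k, Measure (X k)) [∀ k, SigmaFinite (ν k)]
    {μ : Measure (Trace X)} {f : Trace X → ℝ≥0∞} (hf : Measurable f)
    (hμ : μ = (baseMeasure ν).withDensity f)
    {κ : Trace X → Measure (Trace X)} {g : Trace X × Trace X → ℝ≥0∞} (hg : Measurable g)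
    (hκ : ∀ u, κ u = (baseMeasure ν).withDensity fun v => g (u, v))
    {β : Measure (Trace X)}
    (hβ : ∀ A : Set (Trace X), MeasurableSet A → β A = ∫⁻ u, ∫⁻ v,
      (if Disjoint u.1 v.1 then A.indicator (fun _ => (1 : ℝ≥0∞)) (concat u v) else 0) ∂(κ u) ∂μ) :
    β ≪ baseMeasure ν ∧ β = (baseMeasure ν).withDensity (sumSplits fun p => f p.1 * g p) := by
  have β_eq : β = (baseMeasure ν).withDensity (sumSplits fun p => f p.1 * g p) := by
    ext A hA
    simp_rw [hβ A hA, hμ, hκ]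
    rw [lintegral_lintegral_concat_withDensity ν hf hg (measurable_const.indicator hA),
      withDensity_apply _ hA, ← lintegral_indicator hA]
    simp only [← Set.indicator_mul_right, mul_one]
  exact ⟨β_eq ▸ withDensity_absolutelyContinuous _ _, β_eq⟩

theorem sigmaFinite_ν : SigmaFinite ν := by
  have inl_embedding : MeasurableEmbedding (Sum.inl : ℝ → V) :=
    ⟨Sum.inl_injective, measurable_inl, fun _ hS => hS.inl_image⟩
  have inr_embedding : MeasurableEmbedding (Sum.inr : Bool → V) :=
    ⟨Sum.inr_injective, measurable_inr, fun _ hS => hS.inr_image⟩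
  have := inl_embedding.sigmaFinite_map (μ := volume)
  have := inr_embedding.sigmaFinite_map (μ := Measure.count)
  unfold ν
  infer_instance

instance : Countable String :=
  have toNat_injective : Function.Injective Char.toNat := fun _ _ => Char.toNat_inj.mp
  have toList_injective : Function.Injective String.toList := fun _ _ => String.toList_inj.mp
  have := toNat_injective.countable
  toList_injective.countable

/-- Sequencing a trace measure `μ = B𝕋.withDensity f` with a Markov kernel `κ` whose values
have densities `g u` w.r.t. `B𝕋` produces a measure that is absolutely continuous w.r.t.
`B𝕋`, with density at a trace `u` of shape `s` given by the finite sum over subsets `A ⊆ s`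
of `f(u↾A) * g(u↾A, u↾(s \ A))`. -/
theorem seq_absolutelyContinuous
    (μ : Measure 𝕋) [IsFiniteMeasure μ] (f : 𝕋 → ℝ≥0∞) (hf : Measurable f)
    (hμ : μ = B𝕋.withDensity f)
    (κ : ProbabilityTheory.Kernel 𝕋 𝕋) [ProbabilityTheory.IsMarkovKernel κ]
    (g : 𝕋 × 𝕋 → ℝ≥0∞) (hg : Measurable g)
    (hκ : ∀ u : 𝕋, κ u = B𝕋.withDensity (fun u' => g (u, u')))
    (β : Measure 𝕋)
    (hβ : ∀ A : Set 𝕋, MeasurableSet A →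
      β A = ∫⁻ u₁, ∫⁻ u₂,
        (if Disjoint u₁.1 u₂.1 then A.indicator (fun _ => (1 : ℝ≥0∞)) (tcat u₁ u₂) else 0)
          ∂(κ u₁) ∂μ) :
    β ≪ B𝕋 ∧
    β = B𝕋.withDensity (fun u =>
      ∑ A ∈ u.1.powerset.attach,
        f (tres u A.1 (Finset.mem_powerset.mp A.2)) *
        g (tres u A.1 (Finset.mem_powerset.mp A.2),
           tres u (u.1 \ A.1) (Finset.sdiff_subset))) := by
  have : SigmaFinite ν := sigmaFinite_ν
  exact seq_absolutelyContinuous_general (fun _ : String => ν) hf hμ hg hκ hβ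
end

section
/- The Gaussian reparameterization gradient estimator (normal_REPARAM) is unbiased: let m, s : ℝ → ℝ be differentiable with s θ > 0 for all θ, and let f : ℝ → ℝ be differentiable with derivative f'. Assume (i) for every θ, the function ε ↦ f (m θ + s θ · ε) is integrable with respect to the standard Gaussian measure γ = N(0,1) on ℝ; and (ii) the function (θ, ε) ↦ f'(m θ + s θ · ε) · (m'(θ) + s'(θ) · ε) is locally dominated with respect to γ. Then for every θ, ∫ f d(N(m θ, (s θ)²)) = ∫ f (m θ + s θ · ε) dγ(ε), the map L(θ) := ∫ f d(N(m θ, (s θ)²)) is differentiable at θ, and L'(θ) = ∫ f'(m θ + s θ · ε) · (m'(θ) + s'(θ) · ε) dγ(ε), where N(a, v) denotes the Gaussian measure on ℝ with mean a and variance v. -/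
open MeasureTheory ProbabilityTheory
open scoped NNReal

/-- Local domination of a two-argument function with respect to a measure on `ℝ`. -/
def LocallyDominated (γ : Measure ℝ) (h : ℝ → ℝ → ℝ) : Prop :=
  ∀ θ : ℝ, ∃ U ∈ nhds θ, ∃ m : ℝ → ℝ, Integrable m γ ∧ (∀ ε, 0 ≤ m ε) ∧
    ∀ θ' ∈ U, ∀ ε, |h θ' ε| ≤ m ε

/-!
The law `N(m θ, (s θ)²)` is the pushforward of the parameter-free measure `N(0, 1)` under
`ε ↦ m θ + s θ * ε`. The change of variables therefore moves all dependence on `θ` from the measure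
into the integrand, where local domination permits differentiating under the integral sign and the
chain rule computes the derivative.
-/

open Topology

theorem aestronglyMeasurable_of_hasDerivAt {𝕜 α E : Type*} [NontriviallyNormedField 𝕜]
    [MeasurableSpace α] [NormedAddCommGroup E] [NormedSpace 𝕜 E] {μ : Measure α}
    {F : 𝕜 → α → E} {F' : α → E} {x₀ : 𝕜} (hF : ∀ x, AEStronglyMeasurable (F x) μ)
    (hderiv : ∀ᵐ a ∂μ, HasDerivAt (F · a) (F' a) x₀) :
    AEStronglyMeasurable F' μ := by
  have hslope : ∀ x, AEStronglyMeasurable (fun a => slope (F · a) x₀ x) μ := fun x =>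
    ((hF x).sub (hF x₀)).const_smul (x - x₀)⁻¹
  exact aestronglyMeasurable_of_tendsto_ae (𝓝[≠] x₀) hslope
    (hderiv.mono fun _ ha => ha.tendsto_slope)

theorem LocallyDominated.hasDerivAt_integral {γ : Measure ℝ} {F F' : ℝ → ℝ → ℝ}
    (hDom : LocallyDominated γ F') (hInt : ∀ θ, Integrable (F θ) γ)
    (hderiv : ∀ θ ε, HasDerivAt (F · ε) (F' θ ε) θ) (θ : ℝ) :
    HasDerivAt (fun θ' => ∫ ε, F θ' ε ∂γ) (∫ ε, F' θ ε ∂γ) θ := by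
  obtain ⟨U, hU, bound, hbound_int, -, hbound⟩ := hDom θ
  have hF_meas : ∀ θ', AEStronglyMeasurable (F θ') γ := fun θ' => (hInt θ').aestronglyMeasurable
  have hF'_meas : AEStronglyMeasurable (F' θ) γ :=
    aestronglyMeasurable_of_hasDerivAt hF_meas (.of_forall (hderiv θ))
  exact (hasDerivAt_integral_of_dominated_loc_of_deriv_le hU (.of_forall hF_meas) (hInt θ)
    hF'_meas (.of_forall fun ε θ' hθ' => hbound θ' hθ' ε) hbound_int
    (.of_forall fun ε θ' _ => hderiv θ' ε)).2

theorem gaussianReal_map_affine (μ : ℝ) (v : ℝ≥0) (a b : ℝ) :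
    (gaussianReal μ v).map (fun x => a + b * x) =
      gaussianReal (a + b * μ) (Real.toNNReal (b ^ 2) * v) := by
  calc (gaussianReal μ v).map (fun x => a + b * x)
      = ((gaussianReal μ v).map (b * ·)).map (a + ·) :=
        (Measure.map_map (by fun_prop) (by fun_prop)).symm
    _ = gaussianReal (a + b * μ) (Real.toNNReal (b ^ 2) * v) := by
        rw [gaussianReal_map_const_mul, gaussianReal_map_const_add, add_comm,
          Real.toNNReal_of_nonneg (sq_nonneg b)]

theorem gaussian_reparam_unbiased_general {γ : Measure ℝ} {T T' : ℝ → ℝ → ℝ} {f : ℝ → ℝ}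
    (hT_meas : ∀ θ, AEMeasurable (T θ) γ) (hT : ∀ θ ε, HasDerivAt (T · ε) (T' θ ε) θ)
    (hf : Differentiable ℝ f) (hInt : ∀ θ, Integrable (fun ε => f (T θ ε)) γ)
    (hDom : LocallyDominated γ (fun θ ε => deriv f (T θ ε) * T' θ ε)) (θ : ℝ) :
    ∫ x, f x ∂(γ.map (T θ)) = ∫ ε, f (T θ ε) ∂γ ∧
      HasDerivAt (fun θ' => ∫ x, f x ∂(γ.map (T θ')))
        (∫ ε, deriv f (T θ ε) * T' θ ε ∂γ) θ := by
  have hpush : ∀ θ', ∫ x, f x ∂(γ.map (T θ')) = ∫ ε, f (T θ' ε) ∂γ := fun θ' =>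
    integral_map (hT_meas θ') hf.continuous.aestronglyMeasurable
  have hchain : ∀ θ' ε, HasDerivAt (fun θ => f (T θ ε)) (deriv f (T θ' ε) * T' θ' ε) θ' :=
    fun θ' ε => (hf (T θ' ε)).hasDerivAt.comp θ' (hT θ' ε)
  refine ⟨hpush θ, ?_⟩
  simpa only [hpush] using hDom.hasDerivAt_integral hInt hchain θ

/-- The Gaussian reparameterization gradient estimator (`normal_REPARAM`) is unbiased:
for differentiable mean and (positive) standard deviation functions `m, s : ℝ → ℝ` and a
differentiable `f : ℝ → ℝ` such that `ε ↦ f (m θ + s θ * ε)` is integrable against the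
standard Gaussian `γ = N(0,1)` and the reparameterized derivative is locally dominated,
the loss `L θ = ∫ f dN(m θ, (s θ)²)` satisfies
`L θ = ∫ f (m θ + s θ * ε) dγ(ε)`, is differentiable, and
`L' θ = ∫ f' (m θ + s θ * ε) * (m' θ + s' θ * ε) dγ(ε)`. -/
theorem gaussian_reparam_unbiased
    (m s : ℝ → ℝ) (hm : Differentiable ℝ m) (hs : Differentiable ℝ s)
    (hspos : ∀ θ : ℝ, 0 < s θ)
    (f : ℝ → ℝ) (hf : Differentiable ℝ f)
    (hInt : ∀ θ : ℝ, Integrable (fun ε => f (m θ + s θ * ε)) (gaussianReal 0 1))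
    (hDom : LocallyDominated (gaussianReal 0 1)
      (fun θ ε => deriv f (m θ + s θ * ε) * (deriv m θ + deriv s θ * ε))) :
    ∀ θ : ℝ,
      ∫ x, f x ∂(gaussianReal (m θ) (Real.toNNReal ((s θ) ^ 2))) =
        ∫ ε, f (m θ + s θ * ε) ∂(gaussianReal 0 1) ∧
      HasDerivAt (fun θ' => ∫ x, f x ∂(gaussianReal (m θ') (Real.toNNReal ((s θ') ^ 2))))
        (∫ ε, deriv f (m θ + s θ * ε) * (deriv m θ + deriv s θ * ε) ∂(gaussianReal 0 1)) θ := by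
  intro θ
  have hmap : ∀ θ', (gaussianReal 0 1).map (fun ε => m θ' + s θ' * ε) =
      gaussianReal (m θ') (Real.toNNReal ((s θ') ^ 2)) := fun θ' => by
    simpa only [mul_zero, add_zero, mul_one] using gaussianReal_map_affine 0 1 (m θ') (s θ')
  have hderiv : ∀ θ' ε, HasDerivAt (fun θ => m θ + s θ * ε) (deriv m θ' + deriv s θ' * ε) θ' :=
    fun θ' ε => (hm θ').hasDerivAt.add ((hs θ').hasDerivAt.mul_const ε)
  simpa only [hmap] using
    gaussian_reparam_unbiased_general (fun _ => by fun_prop) hderiv hf hInt hDom θ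
end
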